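/- Let (R, m) be a commutative Noetherian local ring and M an R-module of Krull dimension n such that H^n_m(M) is nonzero and Artinian, and let I be an ideal of R with dim(R/(I + Ann M)) = 2, where Ann M is the annihilator of M. If the top local cohomology module H^{cd(I,M)}_I(M) is Artinian, then either cd(I,M) = n, or cd(I,M) = n − 1 and H^2_m(H^{n−2}_I(M)) ≠ 0. -/

import Mathlib

universe u

open CategoryTheory

/-- The cohomological dimension of `M` with respect to `I`:
`cd(I,M) = sup { i ∈ ℕ | H^i_I(M) ≠ 0 }`, as an element of `ℕ∞`. -/
noncomputable def cohomologicalDimension {R : Type u} [CommRing R] (I : Ideal R)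
    (M : ModuleCat.{u} R) : ℕ∞ :=
  sSup {c : ℕ∞ | ∃ i : ℕ, c = i ∧ Nontrivial ((localCohomology I i).obj M)}

/-!
If `I ≤ J` and `H^n_J(M) ≠ 0`, the spectral sequence `H^p_J(H^q_I(M)) ⇒ H^{p+q}_J(M)` yields a
nonzero term `H^p_J(H^q_I(M))` with `p + q = n`. Then `q ≤ cd(I, M) ≤ n`, and
`p ≤ dim(R/(I + Ann M))` by Grothendieck vanishing, since `H^q_I(M)` is supported in
`V(I + Ann M)`. If `q = cd(I, M)` and `H^q_I(M)` is `J`-primary, which for `J = 𝔪` follows from its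
being Artinian, then its higher `J`-local cohomology vanishes; hence `p = 0` and `cd(I, M) = n`.
Otherwise `q < cd(I, M) ≤ n`, so if `cd(I, M) ≠ n` then `p ≤ 2` leaves only `p = 2`.

The nonvanishing of a term needs no spectral sequence: after dividing out `H^0_I(M)`, embed `M` into
a module with vanishing `I`- and `J`-local cohomology, which lowers `n` and `q` simultaneously.
-/

section ExtComparison

open Limits

lemma homologyπ_apply_eq_zero_iff {R ι : Type*} [Ring R] {c : ComplexShape ι}
    (K : HomologicalComplex (ModuleCat R) c) {i j : ι} (hij : c.prev j = i) (z : K.cycles j) :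
    K.homologyπ j z = 0 ↔ ∃ y, K.d i j y = K.iCycles j z := by
  have hK := ShortComplex.exact_of_g_is_cokernel
    (ShortComplex.mk (K.toCycles i j) (K.homologyπ j) (by simp)) (K.homologyIsCokernel i j hij)
  have hd (y) : K.iCycles j (K.toCycles i j y) = K.d i j y := congr($(K.toCycles_i i j) y)
  have hinj : Function.Injective (K.iCycles j) := (ModuleCat.mono_iff_injective _).1 inferInstance
  calc K.homologyπ j z = 0 ↔ ∃ y, K.toCycles i j y = z :=
        (ShortComplex.ShortExact.moduleCat_exact_iff_function_exact _).1 hK z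
    _ ↔ ∃ y, K.d i j y = K.iCycles j z := by simp only [← hd, hinj.eq_iff]

variable {C : Type*} [Category* C] [Abelian C] {X : C} (P : ProjectiveResolution X)

lemma extMk_degree_zero_eq_zero_iff [HasExt C] {Y : C} (f : P.complex.X 0 ⟶ Y)
    (hf : P.complex.d 1 0 ≫ f = 0) : P.extMk f 1 rfl hf = 0 ↔ f = 0 := by
  refine ⟨fun h => ?_, fun h => by subst h; exact P.extMk_zero 1 rfl⟩
  rw [← P.extEquivCohomologyClass.apply_eq_iff_eq, P.extEquivCohomologyClass_extMk,
    P.extEquivCohomologyClass_zero, CochainComplex.HomComplex.CohomologyClass.mk_eq_zero_iff,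
    CochainComplex.HomComplex.Cocycle.toSingleMk_mem_coboundaries_iff _ _ _ _ _ 1 (by lia)] at h
  obtain ⟨g, hg⟩ := h
  have hX : IsZero (P.cochainComplex.X 1) := CochainComplex.isZero_of_isStrictlyLE _ 0 1 (by simp)
  rw [hX.eq_of_src g 0, comp_zero] at hg
  rw [← cancel_epi (P.cochainComplexXIso (-(0 : ℕ)) 0 rfl).hom, comp_zero]
  exact hg.symm

variable {R : Type*} [CommRing R] [Linear R C] {Y : C} {n : ℕ} {X' : C}
  {P' : ProjectiveResolution X'} {g : X' ⟶ X}

variable (R Y) in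
/-- The map of cochain complexes `Hom(K, Y) ⟶ Hom(K', Y)` given by precomposition with a map
`K' ⟶ K` of chain complexes. -/
noncomputable def linearYonedaObjMap {K K' : ChainComplex C ℕ} (f : K' ⟶ K) :
    K.linearYonedaObj R Y ⟶ K'.linearYonedaObj R Y :=
  (HomologicalComplex.unopFunctor (ModuleCat R) _).map
    ((((linearYoneda R C).obj Y).rightOp.mapHomologicalComplex _).map f).op

/-- The morphism `P.complex.X n ⟶ Y` underlying a degree `n` cocycle of the cochain complex
`Hom(P, Y)`. -/
noncomputable def cocycleHom :
    (P.complex.linearYonedaObj R Y).cycles n →ₗ[R] (P.complex.X n ⟶ Y) :=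
  ((P.complex.linearYonedaObj R Y).iCycles n).hom

lemma d_comp_cocycleHom (z : (P.complex.linearYonedaObj R Y).cycles n) :
    P.complex.d (n + 1) n ≫ cocycleHom P z = 0 :=
  congr($((P.complex.linearYonedaObj R Y).iCycles_d n (n + 1)) z)

lemma exists_cocycleHom_eq (f : P.complex.X n ⟶ Y) (hf : P.complex.d (n + 1) n ≫ f = 0) :
    ∃ z, cocycleHom P (R := R) z = f := by
  let K := P.complex.linearYonedaObj R Y
  exact ((ShortComplex.ShortExact.moduleCat_exact_iff_function_exact _).1
    (ShortComplex.exact_of_f_is_kernel (ShortComplex.mk (K.iCycles n) (K.d n (n + 1)) (by simp))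
      (K.cyclesIsKernel n (n + 1) (by simp))) f).1 hf

section
variable [HasExt C]

/-- The class in `Abelian.Ext X Y n` of a degree `n` cocycle of `Hom(P, Y)`, for a projective
resolution `P` of `X`. -/
noncomputable def extClassOfCocycle :
    (P.complex.linearYonedaObj R Y).cycles n →ₗ[R] Abelian.Ext X Y n where
  toFun z := P.extMk (cocycleHom P z) (n + 1) rfl (d_comp_cocycleHom P z)
  map_add' z w := by
    simp only [map_add, P.add_extMk]
  map_smul' r z := by
    simp only [map_smul, RingHom.id_apply, Abelian.Ext.smul_eq_comp_mk₀, P.extMk_comp_mk₀,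
      Linear.comp_smul, Category.comp_id]

lemma extClassOfCocycle_surjective :
    Function.Surjective (extClassOfCocycle P (R := R) (Y := Y) (n := n)) := by
  intro x
  obtain ⟨f, hf, rfl⟩ := P.extMk_surjective x (n + 1) rfl
  obtain ⟨z, rfl⟩ := exists_cocycleHom_eq P (R := R) f hf
  exact ⟨z, rfl⟩

lemma ker_extClassOfCocycle : LinearMap.ker (extClassOfCocycle P) =
    LinearMap.ker ((P.complex.linearYonedaObj R Y).homologyπ n).hom := by
  ext z
  cases n with
  | zero =>
    refine (extMk_degree_zero_eq_zero_iff P _ (d_comp_cocycleHom P z)).trans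
      (Iff.trans ?_ (homologyπ_apply_eq_zero_iff _ (by simp : _ = 0) z).symm)
    rw [HomologicalComplex.shape _ _ _ (by simp)]
    exact ⟨fun h => ⟨0, h.symm⟩, fun ⟨_, h⟩ => h.symm⟩
  | succ n =>
    exact (P.extMk_eq_zero_iff _ (n + 2) rfl (d_comp_cocycleHom P z) n rfl).trans
      (homologyπ_apply_eq_zero_iff _ (by simp : _ = n) z).symm

variable {P} in
lemma mk₀_comp_extClassOfCocycle (φ : ProjectiveResolution.Hom P' P g)
    (z : (P.complex.linearYonedaObj R Y).cycles n) :
    (Abelian.Ext.mk₀ g).comp (extClassOfCocycle P z) (zero_add n) =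
      extClassOfCocycle P' (HomologicalComplex.cyclesMap (linearYonedaObjMap R Y φ.hom) n z) := by
  have hz : φ.hom.f n ≫ cocycleHom P z =
      cocycleHom P' (HomologicalComplex.cyclesMap (linearYonedaObjMap R Y φ.hom) n z) :=
    congr($(HomologicalComplex.cyclesMap_i (linearYonedaObjMap R Y φ.hom) n) z).symm
  simp only [extClassOfCocycle, LinearMap.coe_mk, AddHom.coe_mk, ← hz]
  exact ProjectiveResolution.mk₀_comp_extMk _ (n + 1) rfl (d_comp_cocycleHom P z) φ

end

variable [EnoughProjectives C]

variable {P} in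
lemma isoExt_inv_naturality (φ : ProjectiveResolution.Hom P' P g) :
    (P.isoExt n Y).inv ≫ ((Ext R C n).map g.op).app Y =
      HomologicalComplex.homologyMap (linearYonedaObjMap R Y φ.hom) n ≫ (P'.isoExt n Y).inv := by
  let F := ((linearYoneda R C).obj Y).rightOp
  have hF : (F.leftDerived n).map g ≫ (P.isoLeftDerivedObj F n).hom =
      (P'.isoLeftDerivedObj F n).hom ≫
        (F.mapHomologicalComplex _ ⋙ HomologicalComplex.homologyFunctor _ _ n).map φ.hom :=
    P'.isoLeftDerivedObj_hom_naturality g P φ.hom (by simpa using φ.hom_f_zero_comp_π_f_zero) F n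
  have hop := HomologicalComplex.homologyOp_hom_naturality (linearYonedaObjMap R Y φ.hom) n
  exact congrArg Quiver.Hom.unop (((reassoc_of% hF) _).trans
    (congrArg ((P'.isoLeftDerivedObj F n).hom ≫ ·) hop))

variable [HasExt C]

/-- The comparison between the `Ext`-groups defined by the derived category and the `Ext`-modules
defined by derived functors, computed on a projective resolution of the first argument. -/
noncomputable def abelianExtEquivExt :
    Abelian.Ext X Y n ≃ₗ[R] ((Ext R C n).obj (.op X)).obj Y :=
  ((LinearMap.quotKerEquivOfSurjective _ (extClassOfCocycle_surjective P)).symm.trans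
    (Submodule.quotEquivOfEq _ _ (ker_extClassOfCocycle P))).trans
    ((LinearMap.quotKerEquivOfSurjective _
      ((ModuleCat.epi_iff_surjective _).1 inferInstance)).trans (P.isoExt n Y).symm.toLinearEquiv)

lemma abelianExtEquivExt_extClassOfCocycle (z : (P.complex.linearYonedaObj R Y).cycles n) :
    abelianExtEquivExt P (extClassOfCocycle P z) =
      (P.isoExt n Y).inv ((P.complex.linearYonedaObj R Y).homologyπ n z) := by
  have hz : (LinearMap.quotKerEquivOfSurjective _ (extClassOfCocycle_surjective P)).symm
      (extClassOfCocycle P z) = Submodule.Quotient.mk z := (LinearEquiv.symm_apply_eq _).2 rfl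
  simp [abelianExtEquivExt, hz]

lemma map_abelianExtEquivExt (P : ProjectiveResolution X) (P' : ProjectiveResolution X')
    (g : X' ⟶ X) (x : Abelian.Ext X Y n) :
    ((Ext R C n).map g.op).app Y (abelianExtEquivExt P x) =
      abelianExtEquivExt P' ((Abelian.Ext.mk₀ g).comp x (zero_add n)) := by
  obtain ⟨z, rfl⟩ := extClassOfCocycle_surjective P (R := R) x
  let φ : ProjectiveResolution.Hom P' P g :=
    ⟨ProjectiveResolution.lift g P' P,
      by simpa using ProjectiveResolution.lift_commutes_zero g P' P⟩
  let ψ := linearYonedaObjMap R Y φ.hom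
  calc ((Ext R C n).map g.op).app Y (abelianExtEquivExt P (extClassOfCocycle P z))
      = ((P.isoExt n Y).inv ≫ ((Ext R C n).map g.op).app Y)
          ((P.complex.linearYonedaObj R Y).homologyπ n z) :=
        congrArg _ (abelianExtEquivExt_extClassOfCocycle P z)
    _ = (P'.isoExt n Y).inv ((HomologicalComplex.homologyMap ψ n)
          ((P.complex.linearYonedaObj R Y).homologyπ n z)) :=
        congr($(isoExt_inv_naturality φ) _)
    _ = (P'.isoExt n Y).inv ((P'.complex.linearYonedaObj R Y).homologyπ n
          (HomologicalComplex.cyclesMap ψ n z)) :=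
        congrArg _ congr($(HomologicalComplex.homologyπ_naturality ψ n) z)
    _ = _ := by
        rw [← abelianExtEquivExt_extClassOfCocycle, mk₀_comp_extClassOfCocycle φ]

end ExtComparison

section Exact

variable {R A B C D : Type*} [Ring R] [AddCommGroup A] [Module R A] [AddCommGroup B] [Module R B]
  [AddCommGroup C] [Module R C] [AddCommGroup D] [Module R D] {f : A →ₗ[R] B} {g : B →ₗ[R] C}
  {k : C →ₗ[R] D} (h : Function.Exact f g)
include h

lemma injective_of_exact [Subsingleton A] : Function.Injective g := by
  refine (injective_iff_map_eq_zero g).2 fun y hy => ?_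
  obtain ⟨x, rfl⟩ := (h y).1 hy
  rw [Subsingleton.elim x 0, map_zero]

lemma surjective_of_exact [Subsingleton C] : Function.Surjective f :=
  fun y => (h y).1 (Subsingleton.elim _ _)

lemma subsingleton_of_exact [Subsingleton A] [Subsingleton C] : Subsingleton B :=
  (injective_of_exact h).subsingleton

lemma subsingleton_of_exact_of_surjective (hf : Function.Surjective f) (h' : Function.Exact g k)
    [Subsingleton D] : Subsingleton C := by
  refine subsingleton_of_forall_eq 0 fun z => ?_
  obtain ⟨y, rfl⟩ := surjective_of_exact h' z
  obtain ⟨x, rfl⟩ := hf y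
  exact h.apply_apply_eq_zero x

end Exact

section DirectLimit

variable {R ι : Type*} [Semiring R] [Preorder ι] [IsDirectedOrder ι] [Nonempty ι] [DecidableEq ι]
  {A B C : ι → Type*} [∀ i, AddCommMonoid (A i)] [∀ i, Module R (A i)]
  [∀ i, AddCommMonoid (B i)] [∀ i, Module R (B i)] [∀ i, AddCommMonoid (C i)] [∀ i, Module R (C i)]
  {a : ∀ i j, i ≤ j → A i →ₗ[R] A j} {b : ∀ i j, i ≤ j → B i →ₗ[R] B j}
  {c : ∀ i j, i ≤ j → C i →ₗ[R] C j} [DirectedSystem C (c · · ·)]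

lemma directLimit_map_exact (f : ∀ i, A i →ₗ[R] B i) (g : ∀ i, B i →ₗ[R] C i)
    (hf : ∀ i j h, f j ∘ₗ a i j h = b i j h ∘ₗ f i)
    (hg : ∀ i j h, g j ∘ₗ b i j h = c i j h ∘ₗ g i) (hfg : ∀ i, Function.Exact (f i) (g i)) :
    Function.Exact (Module.DirectLimit.map f hf) (Module.DirectLimit.map g hg) := by
  intro y
  constructor
  · intro hy
    obtain ⟨i, y, rfl⟩ := Module.DirectLimit.exists_of y
    rw [Module.DirectLimit.map_apply_of] at hy
    obtain ⟨j, hij, hj⟩ := Module.DirectLimit.of.zero_exact hy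
    obtain ⟨x, hx⟩ := (hfg j (b i j hij y)).1 ((LinearMap.congr_fun (hg i j hij) y).trans hj)
    exact ⟨Module.DirectLimit.of R ι A a j x, by
      rw [Module.DirectLimit.map_apply_of, hx, Module.DirectLimit.of_f]⟩
  · rintro ⟨x, rfl⟩
    obtain ⟨i, x, rfl⟩ := Module.DirectLimit.exists_of x
    rw [Module.DirectLimit.map_apply_of, Module.DirectLimit.map_apply_of,
      (hfg i).apply_apply_eq_zero, map_zero]

end DirectLimit

section ExtColimit

variable {R : Type u} [CommRing R] (I : Ideal R)

/-- The projection `R ⧸ I ^ t ⟶ R ⧸ I ^ s` for `s ≤ t`. -/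
noncomputable def quotientPowMap {s t : ℕ} (h : s ≤ t) :
    ModuleCat.of R (R ⧸ I ^ t) ⟶ ModuleCat.of R (R ⧸ I ^ s) :=
  ModuleCat.ofHom (Submodule.factor (Ideal.pow_le_pow_right h))

/-- The transition map `Ext^i(R ⧸ I ^ s, M) → Ext^i(R ⧸ I ^ t, M)` for `s ≤ t`. -/
noncomputable def extTransition (i : ℕ) (M : ModuleCat.{u} R) (s t : ℕ) (h : s ≤ t) :
    Abelian.Ext (ModuleCat.of R (R ⧸ I ^ s)) M i →ₗ[R]
      Abelian.Ext (ModuleCat.of R (R ⧸ I ^ t)) M i :=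
  (Abelian.Ext.mk₀ (quotientPowMap I h)).precompOfLinear R M (zero_add i)

instance (i : ℕ) (M : ModuleCat.{u} R) :
    DirectedSystem (fun t => Abelian.Ext (ModuleCat.of R (R ⧸ I ^ t)) M i)
      (extTransition I i M · · ·) where
  map_self t x := by
    have hid : quotientPowMap I (le_refl t) = 𝟙 _ := by
      ext
      rfl
    exact (congrArg (fun φ => (Abelian.Ext.mk₀ φ).comp x (zero_add i)) hid).trans x.mk₀_id_comp
  map_map r s t h h' x := by
    have hcomp : quotientPowMap I h' ≫ quotientPowMap I h = quotientPowMap I (h.trans h') := by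
      ext
      rfl
    calc _ = ((Abelian.Ext.mk₀ (quotientPowMap I h')).comp
            (Abelian.Ext.mk₀ (quotientPowMap I h)) (zero_add 0)).comp x (zero_add i) :=
          (Abelian.Ext.comp_assoc_of_second_deg_zero ..).symm
      _ = _ := by
          rw [Abelian.Ext.mk₀_comp_mk₀, hcomp]
          rfl

/-- The `i`-th local cohomology module of `M` with support in `I`, as the direct limit of the
modules `Ext^i(R ⧸ I ^ t, M)`. Since it is built from `Abelian.Ext`, the long exact sequences of
`Abelian.Ext` pass to it; see `extColimitEquiv` for the comparison with `localCohomology`. -/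
noncomputable def extColimit (i : ℕ) (M : ModuleCat.{u} R) : ModuleCat.{u} R :=
  ModuleCat.of R (Module.DirectLimit (fun t => Abelian.Ext (ModuleCat.of R (R ⧸ I ^ t)) M i)
    (extTransition I i M))

/-- The canonical map from `Ext^i(R ⧸ I ^ t, M)` to the direct limit. -/
noncomputable def toExtColimit (i : ℕ) (M : ModuleCat.{u} R) (t : ℕ) :
    Abelian.Ext (ModuleCat.of R (R ⧸ I ^ t)) M i →ₗ[R] extColimit I i M :=
  Module.DirectLimit.of R ℕ (fun t => Abelian.Ext (ModuleCat.of R (R ⧸ I ^ t)) M i)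
    (extTransition I i M) t

variable {I} {M N : ModuleCat.{u} R} {i j k : ℕ}

lemma exists_toExtColimit (y : extColimit I i M) : ∃ t x, toExtColimit I i M t x = y :=
  Module.DirectLimit.exists_of y

variable (I) in
/-- The map `H^i_I(M) → H^{i+j}_I(N)` given by composition with a class in `Ext^j(M, N)`. -/
noncomputable def extColimitPostcomp (y : Abelian.Ext M N j) (h : i + j = k) :
    extColimit I i M →ₗ[R] extColimit I k N :=
  Module.DirectLimit.map (fun _ => y.postcompOfLinear R _ h) fun _ _ _ => by
    ext x
    exact Abelian.Ext.comp_assoc _ _ _ (zero_add i) h (by lia)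

lemma extColimitPostcomp_toExtColimit (y : Abelian.Ext M N j) (h : i + j = k) (t : ℕ)
    (x : Abelian.Ext (ModuleCat.of R (R ⧸ I ^ t)) M i) :
    extColimitPostcomp I y h (toExtColimit I i M t x) = toExtColimit I k N t (x.comp y h) :=
  Module.DirectLimit.map_apply_of ..

lemma extColimitPostcomp_smul_id (r : R) (x : extColimit I i M) :
    extColimitPostcomp I (.mk₀ (r • 𝟙 M)) (add_zero i) x = r • x := by
  obtain ⟨t, x, rfl⟩ := exists_toExtColimit x
  rw [extColimitPostcomp_toExtColimit, ← map_smul, Abelian.Ext.smul_eq_comp_mk₀]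

lemma annihilator_le_annihilator_extColimit :
    Module.annihilator R M ≤ Module.annihilator R (extColimit I i M) := by
  refine fun r hr => Module.mem_annihilator.2 fun x => ?_
  have h₀ : r • 𝟙 M = 0 := by
    ext z
    exact Module.mem_annihilator.1 hr z
  obtain ⟨t, x, rfl⟩ := exists_toExtColimit x
  rw [← map_smul, Abelian.Ext.smul_eq_comp_mk₀, h₀, Abelian.Ext.mk₀_zero, Abelian.Ext.comp_zero,
    map_zero]

lemma primaryComponent_extColimit (I : Ideal R) (i : ℕ) (M : ModuleCat.{u} R) :
    Ideal.primaryComponent (extColimit I i M) I = ⊤ := by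
  refine eq_top_iff.2 fun y _ => (Ideal.primaryComponent_mem _ I y).2 ?_
  obtain ⟨t, x, rfl⟩ := exists_toExtColimit y
  refine ⟨t, (Submodule.mem_torsionBySet_iff _ _).2 fun ⟨a, ha⟩ => ?_⟩
  have h₀ : a • 𝟙 (ModuleCat.of R (R ⧸ I ^ t)) = 0 := by
    ext
    exact Ideal.Quotient.eq_zero_iff_mem.2 (by simpa using ha)
  rw [← map_smul, ← x.mk₀_id_comp, ← Abelian.Ext.smul_comp, ← Abelian.Ext.mk₀_smul, h₀,
    Abelian.Ext.mk₀_zero, Abelian.Ext.zero_comp, map_zero]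

lemma subsingleton_extColimit_of_subsingleton (I : Ideal R) (i : ℕ) (M : ModuleCat.{u} R)
    [Subsingleton M] : Subsingleton (extColimit I i M) :=
  Module.annihilator_eq_top_iff.1 <| top_le_iff.1 <|
    (Module.annihilator_eq_top_iff.2 ‹Subsingleton M›).ge.trans
      annihilator_le_annihilator_extColimit

lemma subsingleton_extColimit_succ_of_injective (I : Ideal R) (i : ℕ) (E : ModuleCat.{u} R)
    [Injective E] : Subsingleton (extColimit I (i + 1) E) := by
  refine subsingleton_of_forall_eq 0 fun y => ?_
  obtain ⟨t, x, rfl⟩ := exists_toExtColimit y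
  rw [x.eq_zero_of_injective, map_zero]

lemma subsingleton_extColimit_of_iso (e : M ≅ N) [Subsingleton (extColimit I i M)] :
    Subsingleton (extColimit I i N) := by
  refine subsingleton_of_forall_eq 0 fun y => ?_
  obtain ⟨t, x, rfl⟩ := exists_toExtColimit y
  have hx := extColimitPostcomp_toExtColimit (.mk₀ e.hom) (add_zero i) t
    (x.comp (.mk₀ e.inv) (add_zero i))
  simpa using hx.symm.trans (by rw [Subsingleton.elim (toExtColimit I i M t _) 0, map_zero])

section LongExactSequence

variable {S : ShortComplex (ModuleCat.{u} R)} (hS : S.ShortExact)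
include hS

lemma extColimit_exact₁ (h : i + 1 = k) :
    Function.Exact (extColimitPostcomp I hS.extClass h)
      (extColimitPostcomp I (.mk₀ S.f) (add_zero k)) :=
  directLimit_map_exact _ _ _ _ fun _ x => ⟨fun hx =>
    Abelian.Ext.covariant_sequence_exact₁ _ hS x hx h, by
      rintro ⟨x, rfl⟩
      simp⟩

lemma extColimit_exact₂ (I : Ideal R) (i : ℕ) :
    Function.Exact (extColimitPostcomp I (i := i) (.mk₀ S.f) (add_zero i))
      (extColimitPostcomp I (.mk₀ S.g) (add_zero i)) :=
  directLimit_map_exact _ _ _ _ fun _ x => ⟨fun hx =>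
    Abelian.Ext.covariant_sequence_exact₂ _ hS x hx, by
      rintro ⟨x, rfl⟩
      simp⟩

lemma extColimit_exact₃ (h : i + 1 = k) :
    Function.Exact (extColimitPostcomp I (.mk₀ S.g) (add_zero i))
      (extColimitPostcomp I hS.extClass h) :=
  directLimit_map_exact _ _ _ _ fun _ x => ⟨fun hx =>
    Abelian.Ext.covariant_sequence_exact₃ _ hS x h hx, by
      rintro ⟨x, rfl⟩
      simp⟩

lemma subsingleton_extColimit₁ (h : i + 1 = k)
    (hg : Function.Surjective (extColimitPostcomp I (.mk₀ S.g) (add_zero i)))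
    [Subsingleton (extColimit I k S.X₂)] : Subsingleton (extColimit I k S.X₁) :=
  subsingleton_of_exact_of_surjective (extColimit_exact₃ hS h) hg (extColimit_exact₁ hS h)

lemma subsingleton_extColimit₂ [Subsingleton (extColimit I i S.X₁)]
    [Subsingleton (extColimit I i S.X₃)] : Subsingleton (extColimit I i S.X₂) :=
  subsingleton_of_exact (extColimit_exact₂ hS I i)

lemma subsingleton_extColimit₃ (h : i + 1 = k)
    (hf : Function.Surjective (extColimitPostcomp I (.mk₀ S.f) (add_zero i)))
    [Subsingleton (extColimit I k S.X₁)] : Subsingleton (extColimit I i S.X₃) :=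
  subsingleton_of_exact_of_surjective (extColimit_exact₂ hS I i) hf (extColimit_exact₃ hS h)

lemma nonempty_iso_extColimit_of_subsingleton₁ (h : i + 1 = k) [Subsingleton (extColimit I i S.X₁)]
    [Subsingleton (extColimit I k S.X₁)] :
    Nonempty (extColimit I i S.X₂ ≅ extColimit I i S.X₃) :=
  ⟨(LinearEquiv.ofBijective _ ⟨injective_of_exact (extColimit_exact₂ hS I i),
    surjective_of_exact (extColimit_exact₃ hS h)⟩).toModuleIso⟩

lemma nonempty_iso_extColimit_of_subsingleton₂ (h : i + 1 = k) [Subsingleton (extColimit I i S.X₂)]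
    [Subsingleton (extColimit I k S.X₂)] :
    Nonempty (extColimit I i S.X₃ ≅ extColimit I k S.X₁) :=
  ⟨(LinearEquiv.ofBijective _ ⟨injective_of_exact (extColimit_exact₃ hS h),
    surjective_of_exact (extColimit_exact₁ hS h)⟩).toModuleIso⟩

end LongExactSequence
end ExtColimit

section Comparison

open Limits localCohomology

variable {R : Type u} [CommRing R] (I : Ideal R) (i : ℕ) (M : ModuleCat.{u} R)

/-- The cocone exhibiting `H^i_I(M)` as the colimit of the `Ext`-modules of Mathlib's
`localCohomology`. -/
noncomputable def localCohomologyCocone :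
    Cocone (diagram (idealPowersDiagram I) i ⋙ (evaluation _ _).obj M) :=
  ((evaluation _ _).obj M).mapCocone (colimit.cocone (diagram (idealPowersDiagram I) i))

/-- `localCohomologyCocone` is a colimit cocone, since colimits of functors are computed
pointwise. -/
noncomputable def isColimitLocalCohomologyCocone : IsColimit (localCohomologyCocone I i M) :=
  isColimitOfPreserves _ (colimit.isColimit _)

instance : PreservesColimitsOfShape ℕᵒᵖᵒᵖ (forget (ModuleCat.{u} R)) :=
  have := preservesFilteredColimitsOfSize_shrink.{0, u, 0, u} (forget (ModuleCat.{u} R))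
  PreservesFilteredColimitsOfSize.preserves_filtered_colimits _

/-- The comparison of `Ext`-modules applied to the cyclic module `R ⧸ I ^ t`. -/
noncomputable def extQuotientPowEquiv (t : ℕ) :
    Abelian.Ext (ModuleCat.of R (R ⧸ I ^ t)) M i ≃ₗ[R]
      (diagram (idealPowersDiagram I) i ⋙ (evaluation _ _).obj M).obj (.op (.op t)) :=
  abelianExtEquivExt (projectiveResolution (ModuleCat.of R (R ⧸ I ^ t)))

variable {I i M}

lemma map_extQuotientPowEquiv {s t : ℕ} (h : s ≤ t)
    (x : Abelian.Ext (ModuleCat.of R (R ⧸ I ^ s)) M i) :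
    (diagram (idealPowersDiagram I) i ⋙ (evaluation _ _).obj M).map (homOfLE h).op.op
        (extQuotientPowEquiv I i M s x) =
      extQuotientPowEquiv I i M t (extTransition I i M s t h x) :=
  map_abelianExtEquivExt _ _ (quotientPowMap I h) x

variable (I i M)

/-- The canonical map from `Ext^i(R ⧸ I ^ t, M)` to Mathlib's `H^i_I(M)`. -/
noncomputable def toLocalCohomology (t : ℕ) :
    Abelian.Ext (ModuleCat.of R (R ⧸ I ^ t)) M i →ₗ[R] (localCohomology I i).obj M :=
  ((localCohomologyCocone I i M).ι.app (.op (.op t))).hom ∘ₗ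
    (extQuotientPowEquiv I i M t).toLinearMap

variable {I i M}

lemma toLocalCohomology_extTransition {s t : ℕ} (h : s ≤ t)
    (x : Abelian.Ext (ModuleCat.of R (R ⧸ I ^ s)) M i) :
    toLocalCohomology I i M t (extTransition I i M s t h x) = toLocalCohomology I i M s x :=
  (congrArg ((localCohomologyCocone I i M).ι.app (.op (.op t)))
    (map_extQuotientPowEquiv h x).symm).trans
    congr($((localCohomologyCocone I i M).w (homOfLE h).op.op) (extQuotientPowEquiv I i M s x))

lemma exists_toLocalCohomology (y : (localCohomology I i).obj M) :
    ∃ t x, toLocalCohomology I i M t x = y := by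
  obtain ⟨t, x, hx⟩ := Concrete.isColimit_exists_rep _ (isColimitLocalCohomologyCocone I i M) y
  exact ⟨t.unop.unop, (extQuotientPowEquiv I i M t.unop.unop).symm x,
    (congrArg ((localCohomologyCocone I i M).ι.app t)
      ((extQuotientPowEquiv I i M t.unop.unop).apply_symm_apply x)).trans hx⟩

lemma exists_extTransition_eq_zero {s : ℕ} {x : Abelian.Ext (ModuleCat.of R (R ⧸ I ^ s)) M i}
    (hx : toLocalCohomology I i M s x = 0) : ∃ t, ∃ h : s ≤ t, extTransition I i M s t h x = 0 := by
  obtain ⟨t, f, g, hfg⟩ := Concrete.isColimit_exists_of_rep_eq _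
    (isColimitLocalCohomologyCocone I i M) (extQuotientPowEquiv I i M s x)
    (0 : (diagram (idealPowersDiagram I) i ⋙ (evaluation _ _).obj M).obj (.op (.op s)))
    (hx.trans (map_zero _).symm)
  refine ⟨t.unop.unop, leOfHom f.unop.unop,
    (extQuotientPowEquiv I i M t.unop.unop).map_eq_zero_iff.1 ?_⟩
  rw [← map_extQuotientPowEquiv]
  exact hfg.trans (map_zero _)

variable (I i M)

/-- The direct limit of the modules `Ext^i(R ⧸ I ^ t, M)` is Mathlib's `H^i_I(M)`. -/
noncomputable def extColimitEquiv : extColimit I i M ≃ₗ[R] (localCohomology I i).obj M :=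
  .ofBijective (Module.DirectLimit.lift R ℕ _ _ (toLocalCohomology I i M) fun _ _ h x =>
    toLocalCohomology_extTransition h x) <| by
    constructor
    · refine (injective_iff_map_eq_zero _).2 fun y hy => ?_
      obtain ⟨s, x, rfl⟩ := Module.DirectLimit.exists_of y
      rw [Module.DirectLimit.lift_of] at hy
      obtain ⟨t, h, hx⟩ := exists_extTransition_eq_zero hy
      rw [← Module.DirectLimit.of_f (hij := h), hx, map_zero]
    · intro y
      obtain ⟨t, x, rfl⟩ := exists_toLocalCohomology y
      exact ⟨toExtColimit I i M t x, Module.DirectLimit.lift_of _ _ _⟩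

end Comparison
section PrimaryComponent

variable {R M N : Type*} [CommRing R] [AddCommGroup M] [Module R M] [AddCommGroup N] [Module R N]
  {I : Ideal R}

lemma mem_primaryComponent_iff {x : M} :
    x ∈ I.primaryComponent M ↔ ∃ t, ∀ a ∈ I ^ t, a • x = 0 := by
  simp [Ideal.primaryComponent_mem, Submodule.mem_torsionBySet_iff]

lemma primaryComponent_mono {J : Ideal R} (h : I ≤ J) :
    J.primaryComponent M ≤ I.primaryComponent M :=
  iSup_mono fun t => Submodule.torsionBySet_le_torsionBySet_of_subset (Ideal.pow_right_mono h t)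

lemma mem_primaryComponent_map_iff {f : M →ₗ[R] N} (hf : Function.Injective f) {x : M} :
    f x ∈ I.primaryComponent N ↔ x ∈ I.primaryComponent M := by
  simp only [mem_primaryComponent_iff, ← map_smul, map_eq_zero_iff f hf]

lemma primaryComponent_eq_top_of_injective {f : M →ₗ[R] N} (hf : Function.Injective f)
    (hN : I.primaryComponent N = ⊤) : I.primaryComponent M = ⊤ :=
  eq_top_iff.2 fun _ _ => (mem_primaryComponent_map_iff hf).1 (hN ▸ Submodule.mem_top)

lemma primaryComponent_eq_top_of_surjective {f : M →ₗ[R] N} (hf : Function.Surjective f)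
    (hM : I.primaryComponent M = ⊤) : I.primaryComponent N = ⊤ := by
  refine eq_top_iff.2 fun y _ => ?_
  obtain ⟨x, rfl⟩ := hf y
  exact Ideal.primaryComponent_map_mem I f ⟨x, hM ▸ Submodule.mem_top⟩

lemma primaryComponent_primaryComponent :
    I.primaryComponent (I.primaryComponent M) = ⊤ :=
  eq_top_iff.2 fun x _ =>
    (mem_primaryComponent_map_iff (I.primaryComponent M).injective_subtype).1 x.2

end PrimaryComponent

section DegreeZero

variable {R : Type u} [CommRing R] {I : Ideal R} {M N : ModuleCat.{u} R}

variable (I M) in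
/-- Evaluation at `1` of a degree zero class, viewed as a morphism `R ⧸ I ^ t ⟶ M`. -/
noncomputable def extZeroEval (t : ℕ) : Abelian.Ext (ModuleCat.of R (R ⧸ I ^ t)) M 0 →ₗ[R] M :=
  LinearMap.applyₗ (Submodule.Quotient.mk 1 : R ⧸ I ^ t) ∘ₗ
    (Abelian.Ext.linearEquiv₀.trans ModuleCat.homLinearEquiv).toLinearMap

lemma extZeroEval_mk₀ {t : ℕ} (f : ModuleCat.of R (R ⧸ I ^ t) ⟶ M) :
    extZeroEval I M t (.mk₀ f) = f (Submodule.Quotient.mk 1 : R ⧸ I ^ t) :=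
  congr($(Abelian.Ext.linearEquiv₀ (R := R).apply_symm_apply f)
    (Submodule.Quotient.mk 1 : R ⧸ I ^ t))

lemma extZeroEval_injective (t : ℕ) : Function.Injective (extZeroEval I M t) := by
  refine (injective_iff_map_eq_zero _).2 fun x hx => ?_
  obtain ⟨f, rfl⟩ := (Abelian.Ext.mk₀_bijective _ _).2 x
  rw [extZeroEval_mk₀] at hx
  have hf : f = 0 := by
    ext
    exact hx
  rw [hf, Abelian.Ext.mk₀_zero]

variable (I M) in
/-- The canonical map from `H^0_I(M)` to `M`, whose image is the `I`-primary component of `M`. -/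
noncomputable def extColimitZeroEval : extColimit I 0 M →ₗ[R] M :=
  Module.DirectLimit.lift R ℕ _ _ (extZeroEval I M) fun s t h x => by
    obtain ⟨f, rfl⟩ := (Abelian.Ext.mk₀_bijective _ _).2 x
    exact (congrArg _ (Abelian.Ext.mk₀_comp_mk₀ _ f)).trans
      ((extZeroEval_mk₀ _).trans (extZeroEval_mk₀ f).symm)

lemma extColimitZeroEval_toExtColimit (t : ℕ)
    (x : Abelian.Ext (ModuleCat.of R (R ⧸ I ^ t)) M 0) :
    extColimitZeroEval I M (toExtColimit I 0 M t x) = extZeroEval I M t x :=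
  Module.DirectLimit.lift_of _ _ _

lemma extColimitZeroEval_injective : Function.Injective (extColimitZeroEval I M) :=
  Module.DirectLimit.lift_injective _ _ extZeroEval_injective

lemma extColimitZeroEval_postcomp (g : M ⟶ N) (x : extColimit I 0 M) :
    extColimitZeroEval I N (extColimitPostcomp I (.mk₀ g) (add_zero 0) x) =
      g (extColimitZeroEval I M x) := by
  obtain ⟨t, x, rfl⟩ := exists_toExtColimit x
  obtain ⟨f, rfl⟩ := (Abelian.Ext.mk₀_bijective _ _).2 x
  rw [extColimitPostcomp_toExtColimit, Abelian.Ext.mk₀_comp_mk₀, extColimitZeroEval_toExtColimit,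
    extColimitZeroEval_toExtColimit, extZeroEval_mk₀, extZeroEval_mk₀]
  rfl

lemma range_extColimitZeroEval :
    LinearMap.range (extColimitZeroEval I M) = I.primaryComponent M := by
  refine le_antisymm ?_ fun x hx => ?_
  · rintro _ ⟨x, rfl⟩
    exact Ideal.primaryComponent_map_mem I (extColimitZeroEval I M)
      ⟨x, primaryComponent_extColimit I 0 M ▸ Submodule.mem_top⟩
  · obtain ⟨t, ht⟩ := mem_primaryComponent_iff.1 hx
    let f := ModuleCat.ofHom (Submodule.liftQ (I ^ t) (LinearMap.toSpanSingleton R M x) ht)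
    refine ⟨toExtColimit I 0 M t (.mk₀ f), ?_⟩
    rw [extColimitZeroEval_toExtColimit, extZeroEval_mk₀]
    exact one_smul R x

variable (I M) in
/-- The zeroth local cohomology of `M` is its `I`-primary component. -/
noncomputable def extColimitZeroEquiv : extColimit I 0 M ≃ₗ[R] I.primaryComponent M :=
  (LinearEquiv.ofInjective _ extColimitZeroEval_injective).trans
    (LinearEquiv.ofEq _ _ range_extColimitZeroEval)

lemma subsingleton_extColimit_zero_iff :
    Subsingleton (extColimit I 0 M) ↔ I.primaryComponent M = ⊥ :=
  (extColimitZeroEquiv I M).toEquiv.subsingleton_congr.trans Submodule.subsingleton_iff_eq_bot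

lemma extColimitPostcomp_zero_surjective (g : M ⟶ N) (hg : ∀ y ∈ I.primaryComponent N,
    ∃ x ∈ I.primaryComponent M, g x = y) :
    Function.Surjective (extColimitPostcomp I (.mk₀ g) (add_zero 0)) := by
  intro y
  obtain ⟨x, hx, hxy⟩ := hg (extColimitZeroEval I N y) (range_extColimitZeroEval.le ⟨y, rfl⟩)
  rw [← range_extColimitZeroEval] at hx
  obtain ⟨x, rfl⟩ := hx
  exact ⟨x, extColimitZeroEval_injective ((extColimitZeroEval_postcomp g x).trans hxy)⟩

end DegreeZero
section InjectivePrimaryComponent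

variable {R : Type*} [CommRing R] {I : Ideal R} {M : Type*} [AddCommGroup M] [Module R M]

lemma exists_pow_le_annihilator [Module.Finite R M] (hM : I.primaryComponent M = ⊤) :
    ∃ t, I ^ t ≤ Module.annihilator R M := by
  obtain ⟨t, ht⟩ := Submodule.FG.stabilizes_of_iSup_eq (Module.finite_def.1 ‹_›)
    ⟨fun t => Submodule.torsionBySet R M ↑(I ^ t), fun _ _ h =>
      Submodule.torsionBySet_le_torsionBySet_of_subset (Ideal.pow_le_pow_right h)⟩ hM
  refine ⟨t, fun a ha => Module.mem_annihilator.2 fun x => ?_⟩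
  exact (Submodule.mem_torsionBySet_iff _ x).1 (ht.le Submodule.mem_top) ⟨a, ha⟩

variable [IsNoetherianRing R]

variable (I) in
lemma exists_pow_inf_le_mul (𝔞 : Ideal R) (t : ℕ) : ∃ s, I ^ s ⊓ 𝔞 ≤ I ^ t * 𝔞 := by
  obtain ⟨k, hk⟩ := I.exists_pow_inf_eq_pow_smul 𝔞
  refine ⟨t + k, ?_⟩
  have h := hk (t + k) (Nat.le_add_left k t)
  rw [Nat.add_sub_cancel, smul_eq_mul, Ideal.mul_top] at h
  exact h.le.trans (Ideal.mul_mono_right inf_le_right)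

lemma exists_pow_forall_map_eq_zero (hM : I.primaryComponent M = ⊤) {𝔞 : Ideal R}
    (f : 𝔞 →ₗ[R] M) : ∃ s, ∀ x : 𝔞, x.1 ∈ I ^ s → f x = 0 := by
  obtain ⟨t, ht⟩ := exists_pow_le_annihilator
    (primaryComponent_eq_top_of_injective (LinearMap.range f).injective_subtype hM)
  obtain ⟨s, hs⟩ := exists_pow_inf_le_mul I 𝔞 t
  have hker : I ^ t * 𝔞 ≤ (LinearMap.ker f).map 𝔞.subtype := Ideal.mul_le.2 fun a ha y hy =>
    ⟨a • ⟨y, hy⟩, by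
      rw [SetLike.mem_coe, LinearMap.mem_ker, map_smul]
      exact congrArg Subtype.val (Module.mem_annihilator.1 (ht ha) ⟨f ⟨y, hy⟩, _, rfl⟩), rfl⟩
  refine ⟨s, fun x hx => ?_⟩
  obtain ⟨z, hz, hzx⟩ := hker (hs ⟨hx, x.2⟩)
  rwa [Subtype.ext hzx] at hz

lemma baer_primaryComponent (hM : Module.Baer R M) :
    Module.Baer R (I.primaryComponent M) := by
  intro 𝔞 f
  obtain ⟨s, hs⟩ := exists_pow_forall_map_eq_zero primaryComponent_primaryComponent f
  let φ : R →ₗ.[R] M := ⟨𝔞, Submodule.subtype _ ∘ₗ f⟩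
  let ψ : R →ₗ.[R] M := ⟨I ^ s, 0⟩
  have hφψ (x : φ.domain) (y : ψ.domain) (h : (x : R) = y) : φ x = ψ y :=
    congrArg Subtype.val (hs x (h ▸ y.2))
  obtain ⟨g, hg⟩ := hM _ (φ.sup ψ hφψ).toFun
  have hgφ (x : R) (hx : x ∈ 𝔞) : g x = f ⟨x, hx⟩ :=
    (hg x (Submodule.mem_sup_left hx)).trans ((φ.left_le_sup ψ hφψ).2 (x := ⟨x, hx⟩) rfl).symm
  have hgψ (x : R) (hx : x ∈ I ^ s) : g x = 0 :=
    (hg x (Submodule.mem_sup_right hx)).trans ((φ.right_le_sup ψ hφψ).2 (x := ⟨x, hx⟩) rfl).symm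
  refine ⟨g.codRestrict _ fun x => mem_primaryComponent_iff.2 ⟨s, fun a ha => ?_⟩,
    fun x hx => Subtype.ext (hgφ x hx)⟩
  rw [← map_smul, smul_eq_mul, hgψ _ (Ideal.mul_mem_right x _ ha)]

end InjectivePrimaryComponent

section TorsionVanishing

variable {R : Type u} [CommRing R] [IsNoetherianRing R] {I : Ideal R}

instance injective_primaryComponent (E : ModuleCat.{u} R) [Injective E] :
    Injective (ModuleCat.of R (I.primaryComponent E)) :=
  have : Module.Injective R E := Module.injective_module_of_injective_object R E
  have := (baer_primaryComponent (I := I) (Module.Baer.of_injective this)).injective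
  Module.injective_object_of_injective_module R _

lemma cokernel_shortExact {C : Type*} [Category* C] [Abelian C] {X Y : C} (f : X ⟶ Y) [Mono f] :
    (ShortComplex.mk f (Limits.cokernel.π f) (Limits.cokernel.condition f)).ShortExact where
  exact := ShortComplex.exact_cokernel f

lemma exists_mono_injective_primaryComponent_eq_top (N : ModuleCat.{u} R)
    (hN : I.primaryComponent N = ⊤) :
    ∃ (E : ModuleCat.{u} R) (f : N ⟶ E), Mono f ∧ Injective E ∧ I.primaryComponent E = ⊤ := by
  refine ⟨ModuleCat.of R (I.primaryComponent (Injective.under N : ModuleCat.{u} R)),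
    ModuleCat.ofHom ((Injective.ι N).hom.codRestrict _ fun x =>
      Ideal.primaryComponent_map_mem I _ ⟨x, hN ▸ Submodule.mem_top⟩),
    (ModuleCat.mono_iff_injective _).2 ?_, inferInstance, primaryComponent_primaryComponent⟩
  exact (LinearMap.injective_codRestrict_iff ..).2
    ((ModuleCat.mono_iff_injective (Injective.ι N)).1 inferInstance)

lemma subsingleton_extColimit_succ_of_primaryComponent_eq_top (i : ℕ) (N : ModuleCat.{u} R)
    (hN : I.primaryComponent N = ⊤) : Subsingleton (extColimit I (i + 1) N) := by
  obtain ⟨E, f, _, _, hE⟩ := exists_mono_injective_primaryComponent_eq_top N hN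
  have hS := cokernel_shortExact f
  suffices hg : Function.Surjective
      (extColimitPostcomp I (i := i) (.mk₀ (Limits.cokernel.π f)) (add_zero i)) by
    have := subsingleton_extColimit_succ_of_injective I i E
    exact (subsingleton_extColimit₁ hS rfl hg :)
  cases i with
  | zero =>
    refine extColimitPostcomp_zero_surjective _ fun y _ => ?_
    obtain ⟨x, hx⟩ := hS.moduleCat_surjective_g y
    exact ⟨x, hE ▸ Submodule.mem_top, hx⟩
  | succ i =>
    have := subsingleton_extColimit_succ_of_primaryComponent_eq_top i _
      (primaryComponent_eq_top_of_surjective hS.moduleCat_surjective_g hE)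
    exact Function.surjective_to_subsingleton _

end TorsionVanishing

section GrothendieckVanishing

variable {R : Type u} [CommRing R] {I : Ideal R} {i : ℕ}

lemma subsingleton_extColimit_succ_of_isSMulRegular {M : ModuleCat.{u} R} {r : R} (hr : r ∈ I)
    (hreg : IsSMulRegular M r) [Subsingleton (extColimit I i (ModuleCat.of R (QuotSMulTop r M)))] :
    Subsingleton (extColimit I (i + 1) M) := by
  have : Subsingleton (extColimit I i (M.smulShortComplex r).X₃) := ‹_›
  have hreg' : IsSMulRegular (extColimit I (i + 1) M) r := fun x y hxy =>
    injective_of_exact (extColimit_exact₁ (I := I) hreg.smulShortComplex_shortExact rfl)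
      ((extColimitPostcomp_smul_id r x).trans (hxy.trans (extColimitPostcomp_smul_id r y).symm))
  refine subsingleton_of_forall_eq 0 fun x => ?_
  obtain ⟨t, ht⟩ := mem_primaryComponent_iff.1
    (primaryComponent_extColimit I (i + 1) M ▸ Submodule.mem_top : x ∈ _)
  exact (hreg'.pow t).right_eq_zero_of_smul (ht _ (Ideal.pow_mem_pow hr t))

variable [IsNoetherianRing R]

lemma exists_fg_submodule_ext {X N : ModuleCat.{u} R} [Module.Finite R X]
    (x : Abelian.Ext X N i) :
    ∃ N' : Submodule R N, N'.FG ∧ ∃ x' : Abelian.Ext X (ModuleCat.of R N') i,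
      x'.comp (.mk₀ (ModuleCat.ofHom N'.subtype)) (add_zero i) = x := by
  induction i generalizing X with
  | zero =>
    obtain ⟨f, rfl⟩ := (Abelian.Ext.mk₀_bijective _ _).2 x
    refine ⟨LinearMap.range f.hom, Module.Finite.iff_fg.1 inferInstance,
      .mk₀ (ModuleCat.ofHom f.hom.rangeRestrict), ?_⟩
    rw [Abelian.Ext.mk₀_comp_mk₀]
    rfl
  | succ i ih =>
    obtain ⟨n, f, hf⟩ := Module.Finite.exists_fin' R X
    have hS := LinearMap.shortExact_shortComplexKer hf
    have : Projective f.shortComplexKer.X₂ := ModuleCat.projective_of_free (Pi.basisFun R (Fin n))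
    obtain ⟨x₁, rfl⟩ := Abelian.Ext.contravariant_sequence_exact₃ hS N x
      (Abelian.Ext.eq_zero_of_projective _) (add_comm 1 i)
    obtain ⟨N', hN', x', rfl⟩ := ih x₁
    exact ⟨N', hN', hS.extClass.comp x' (add_comm 1 i),
      Abelian.Ext.comp_assoc_of_third_deg_zero _ _ _ _⟩

lemma subsingleton_extColimit_of_forall_fg (N : ModuleCat.{u} R)
    (h : ∀ N' : Submodule R N, N'.FG → Subsingleton (extColimit I i (ModuleCat.of R N'))) :
    Subsingleton (extColimit I i N) := by
  refine subsingleton_of_forall_eq 0 fun y => ?_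
  obtain ⟨t, x, rfl⟩ := exists_toExtColimit y
  obtain ⟨N', hN', x', rfl⟩ := exists_fg_submodule_ext x
  have := h N' hN'
  rw [← extColimitPostcomp_toExtColimit, Subsingleton.elim (toExtColimit I i _ t x') 0, map_zero]

lemma isSMulRegular_quotient_of_notMem {R : Type*} [CommRing R] {p : Ideal R} [p.IsPrime] {r : R}
    (hr : r ∉ p) : IsSMulRegular (R ⧸ p) r :=
  .of_right_eq_zero_of_smul fun y hy => by
    rw [Algebra.smul_def, mul_eq_zero] at hy
    exact hy.resolve_left (mt Ideal.Quotient.eq_zero_iff_mem.1 hr)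

lemma subsingleton_extColimit_quotient_prime {d : ℕ} (p : Ideal R) [p.IsPrime]
    (hp : Module.supportDim R (R ⧸ p) < (d + 1 : ℕ))
    (ih : ∀ N : ModuleCat.{u} R, Module.supportDim R N < d → Subsingleton (extColimit I i N)) :
    Subsingleton (extColimit I (i + 1) (ModuleCat.of R (R ⧸ p))) := by
  by_cases hIp : I ≤ p
  · refine subsingleton_extColimit_succ_of_primaryComponent_eq_top i _ <|
      eq_top_iff.2 fun y _ => mem_primaryComponent_iff.2 ⟨1, fun a ha => ?_⟩
    rw [pow_one] at ha
    rw [Algebra.smul_def]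
    exact mul_eq_zero_of_left (Ideal.Quotient.eq_zero_iff_mem.2 (hIp ha)) y
  · obtain ⟨r, hr, hrp⟩ := Set.not_subset.1 hIp
    have hreg := isSMulRegular_quotient_of_notMem hrp
    have hdim := (Module.supportDim_quotSMulTop_succ_le_of_notMem_minimalPrimes
      fun _ => hreg.notMem_of_mem_minimalPrimes).trans_lt hp
    rw [Nat.cast_add, Nat.cast_one] at hdim
    have := ih (ModuleCat.of R (QuotSMulTop r (R ⧸ p))) (lt_of_add_lt_add_right hdim)
    exact subsingleton_extColimit_succ_of_isSMulRegular hr hreg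

theorem subsingleton_extColimit_of_supportDim_lt (I : Ideal R) {d : ℕ} (hi : d ≤ i)
    (N : ModuleCat.{u} R) (hN : Module.supportDim R N < d) : Subsingleton (extColimit I i N) := by
  induction d generalizing i N with
  | zero =>
    have : Subsingleton N :=
      (Module.supportDim_eq_bot_iff_subsingleton R N).1 (WithBot.lt_coe_bot.1 hN)
    exact subsingleton_extColimit_of_subsingleton I i N
  | succ d ih =>
    obtain ⟨i, rfl⟩ := Nat.exists_eq_add_of_le' (Nat.one_le_of_lt hi)
    suffices key : ∀ (P : Type u) [AddCommGroup P] [Module R P], Module.Finite R P →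
        Module.supportDim R P < (d + 1 : ℕ) →
        Subsingleton (extColimit I (i + 1) (ModuleCat.of R P)) from
      subsingleton_extColimit_of_forall_fg N fun N' hN' => key N' (Module.Finite.iff_fg.2 hN')
        ((Module.supportDim_le_of_injective _ N'.injective_subtype).trans_lt hN)
    intro P _ _ hP
    induction hP using IsNoetherianRing.induction_on_isQuotientEquivQuotientPrime R with
    | subsingleton P => exact fun _ => subsingleton_extColimit_of_subsingleton I _ _
    | quotient P p e =>
      intro hP
      rw [Module.supportDim_eq_of_equiv e] at hP
      have := subsingleton_extColimit_quotient_prime (I := I) p.1 hP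
        (ih (Nat.le_of_succ_le_succ hi))
      exact subsingleton_extColimit_of_iso e.symm.toModuleIso
    | exact P₁ P₂ P₃ f g hf hg hfg h₁ h₃ =>
      intro hP
      have := h₁ ((Module.supportDim_le_of_injective f hf).trans_lt hP)
      have := h₃ ((Module.supportDim_le_of_surjective g hg).trans_lt hP)
      exact (subsingleton_extColimit₂ (I := I) (i := i + 1) (ModuleCat.shortComplex_shortExact
        (ModuleCat.shortComplexOfCompEqZero f g hfg.linearMap_comp_eq_zero) hfg hf hg) :)

end GrothendieckVanishing

section CompositeVanishing

variable {R : Type u} [CommRing R]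

lemma quotient_shortExact {M : ModuleCat.{u} R} (P : Submodule R M) :
    (ModuleCat.shortComplexOfCompEqZero P.subtype P.mkQ
      (LinearMap.exact_subtype_mkQ P).linearMap_comp_eq_zero).ShortExact :=
  ModuleCat.shortComplex_shortExact _ (LinearMap.exact_subtype_mkQ P) P.injective_subtype
    P.mkQ_surjective

variable [IsNoetherianRing R] {I J : Ideal R} (M : ModuleCat.{u} R)

lemma primaryComponent_quotient_primaryComponent :
    I.primaryComponent (M ⧸ I.primaryComponent M) = ⊥ := by
  have := subsingleton_extColimit_succ_of_primaryComponent_eq_top 0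
    (ModuleCat.of R (I.primaryComponent M)) primaryComponent_primaryComponent
  refine (subsingleton_extColimit_zero_iff (M := ModuleCat.of R (M ⧸ I.primaryComponent M))).1 ?_
  have hf := extColimitPostcomp_zero_surjective (I := I)
    (ModuleCat.ofHom (I.primaryComponent M).subtype) fun y hy =>
      ⟨⟨y, hy⟩, primaryComponent_primaryComponent.ge Submodule.mem_top, rfl⟩
  exact (subsingleton_extColimit₃ (quotient_shortExact (I.primaryComponent M)) (zero_add 1) hf :)

lemma nonempty_iso_extColimit_quotient_primaryComponent (i : ℕ) :
    Nonempty (extColimit I (i + 1) M ≅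
      extColimit I (i + 1) (ModuleCat.of R (M ⧸ I.primaryComponent M))) := by
  have h (k : ℕ) := subsingleton_extColimit_succ_of_primaryComponent_eq_top k
    (ModuleCat.of R (I.primaryComponent M)) primaryComponent_primaryComponent
  have := h i
  have := h (i + 1)
  exact (nonempty_iso_extColimit_of_subsingleton₁ (I := I) (i := i + 1)
    (quotient_shortExact (I.primaryComponent M)) rfl :)

lemma subsingleton_extColimit_injective_quotient (i : ℕ) (E : ModuleCat.{u} R) [Injective E] :
    Subsingleton (extColimit I i (ModuleCat.of R (E ⧸ I.primaryComponent E))) := by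
  cases i with
  | zero => exact subsingleton_extColimit_zero_iff.2 (primaryComponent_quotient_primaryComponent E)
  | succ i =>
    obtain ⟨e⟩ := nonempty_iso_extColimit_quotient_primaryComponent (I := I) E i
    have := subsingleton_extColimit_succ_of_injective I i E
    exact e.toLinearEquiv.symm.toEquiv.subsingleton

lemma subsingleton_extColimit_injective_quotient_of_le (hIJ : I ≤ J) (i : ℕ) (E : ModuleCat.{u} R)
    [Injective E] :
    Subsingleton (extColimit J i (ModuleCat.of R (E ⧸ I.primaryComponent E))) := by
  cases i with
  | zero =>
    refine subsingleton_extColimit_zero_iff.2 (le_bot_iff.1 ((primaryComponent_mono hIJ).trans ?_))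
    exact (primaryComponent_quotient_primaryComponent E).le
  | succ i =>
    have := subsingleton_extColimit_succ_of_injective J i E
    have := subsingleton_extColimit_succ_of_injective J (i + 1)
      (ModuleCat.of R (I.primaryComponent E))
    exact (subsingleton_extColimit₃ (I := J) (i := i + 1)
      (quotient_shortExact (I.primaryComponent E)) rfl (Function.surjective_to_subsingleton _) :)

lemma exists_iso_extColimit_succ (hIJ : I ≤ J) (hM : I.primaryComponent M = ⊥) :
    ∃ N : ModuleCat.{u} R, (∀ i, Nonempty (extColimit I i N ≅ extColimit I (i + 1) M)) ∧
      ∀ i, Nonempty (extColimit J i N ≅ extColimit J (i + 1) M) := by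
  let E : ModuleCat.{u} R := Injective.under M
  let f : M ⟶ ModuleCat.of R (E ⧸ I.primaryComponent E) :=
    Injective.ι M ≫ ModuleCat.ofHom (I.primaryComponent E).mkQ
  have hι : Function.Injective (Injective.ι M).hom :=
    (ModuleCat.mono_iff_injective _).1 inferInstance
  have : Mono f := by
    refine (ModuleCat.mono_iff_injective _).2 ((injective_iff_map_eq_zero f.hom).2 fun x hx => ?_)
    rw [← Submodule.mem_bot R, ← hM]
    exact (mem_primaryComponent_map_iff hι).1 ((Submodule.Quotient.mk_eq_zero _).1 hx)
  have hI i := subsingleton_extColimit_injective_quotient (I := I) i E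
  have hJ i := subsingleton_extColimit_injective_quotient_of_le hIJ i E
  have hS := cokernel_shortExact f
  exact ⟨Limits.cokernel f,
    fun i => (nonempty_iso_extColimit_of_subsingleton₂ (I := I) (i := i) hS rfl :),
    fun i => (nonempty_iso_extColimit_of_subsingleton₂ (I := J) (i := i) hS rfl :)⟩

/-- The vanishing consequence of the Grothendieck spectral sequence
`H^p_J(H^q_I(M)) ⇒ H^{p+q}_J(M)`. -/
theorem subsingleton_extColimit_of_extColimit_extColimit (hIJ : I ≤ J) {n : ℕ}
    (h : ∀ p q, p + q = n → Subsingleton (extColimit J p (extColimit I q M))) :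
    Subsingleton (extColimit J n M) := by
  induction n generalizing M with
  | zero =>
    have h₀ := subsingleton_extColimit_zero_iff.1 (h 0 0 rfl)
    refine subsingleton_extColimit_zero_iff.2 ((Submodule.eq_bot_iff _).2 fun x hx => ?_)
    obtain ⟨y, rfl⟩ := range_extColimitZeroEval.ge (primaryComponent_mono hIJ hx)
    have hy := (mem_primaryComponent_map_iff extColimitZeroEval_injective).1 hx
    rw [h₀, Submodule.mem_bot] at hy
    rw [hy, map_zero]
  | succ n ih =>
    have := h (n + 1) 0 rfl
    have := subsingleton_extColimit_of_iso (I := J) (i := n + 1)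
      (extColimitZeroEquiv I M).toModuleIso
    obtain ⟨N, hI, hJ⟩ := exists_iso_extColimit_succ
      (ModuleCat.of R (M ⧸ I.primaryComponent M)) hIJ (primaryComponent_quotient_primaryComponent M)
    have : Subsingleton (extColimit J n N) := ih N fun p q hpq => by
      obtain ⟨e⟩ := hI q
      obtain ⟨e'⟩ := nonempty_iso_extColimit_quotient_primaryComponent (I := I) M q
      have := h p (q + 1) (congrArg (· + 1) hpq)
      exact subsingleton_extColimit_of_iso (e' ≪≫ e.symm)
    obtain ⟨e⟩ := hJ n
    have := e.toLinearEquiv.symm.toEquiv.subsingleton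
    exact (subsingleton_extColimit₂ (I := J) (i := n + 1)
      (quotient_shortExact (I.primaryComponent M)) :)

end CompositeVanishing

section PrimaryModules

variable {R : Type*} [CommRing R] {I : Ideal R} {M : Type*} [AddCommGroup M] [Module R M]

lemma supportDim_le_of_primaryComponent_eq_top {𝔞 : Ideal R} (hM : I.primaryComponent M = ⊤)
    (h𝔞 : 𝔞 ≤ Module.annihilator R M) :
    Module.supportDim R M ≤ ringKrullDim (R ⧸ (I + 𝔞)) := by
  rw [ringKrullDim_quotient]
  refine Order.krullDim_le_of_strictMono (Set.inclusion fun p hp => ?_) fun _ _ h => h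
  obtain ⟨x, hx⟩ := Module.mem_support_iff'.1 hp
  obtain ⟨t, ht⟩ := mem_primaryComponent_iff.1 (hM ▸ Submodule.mem_top : x ∈ I.primaryComponent M)
  have hI : I ≤ p.asIdeal := p.2.le_of_pow_le fun a ha => of_not_not fun hap => hx a hap (ht a ha)
  exact sup_le hI (h𝔞.trans (Module.annihilator_le_of_mem_support hp))

lemma primaryComponent_eq_top_of_isArtinian [IsNoetherianRing R] [IsArtinian R M]
    (hI : I ≤ Ideal.jacobson ⊥) : I.primaryComponent M = ⊤ := by
  refine eq_top_iff.2 fun x _ => ?_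
  let N := Submodule.span R {x}
  obtain ⟨t, ht⟩ := IsArtinian.monotone_stabilizes (R := R) (M := M)
    ⟨fun t => OrderDual.toDual (I ^ t • N),
      fun _ _ h => Submodule.smul_mono_left (Ideal.pow_le_pow_right h)⟩
  have hN : I ^ t • N = ⊥ := by
    refine Submodule.eq_bot_of_le_smul_of_le_jacobson_bot I _
      (.smul (IsNoetherian.noetherian _) (Submodule.fg_span_singleton x)) ?_ hI
    rw [← Submodule.mul_smul, ← pow_succ']
    exact le_of_eq (ht (t + 1) t.le_succ)
  refine mem_primaryComponent_iff.2 ⟨t, fun a ha => ?_⟩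
  rw [← Submodule.mem_bot R, ← hN]
  exact Submodule.smul_mem_smul ha (Submodule.mem_span_singleton_self x)

end PrimaryModules

lemma ne_top_of_ringKrullDim_quotient_ne_bot {R : Type*} [CommRing R] {I : Ideal R}
    (h : ringKrullDim (R ⧸ I) ≠ ⊥) : I ≠ ⊤ := fun hI => h <|
  have : Subsingleton (R ⧸ I) := Ideal.Quotient.subsingleton_iff.2 hI
  ringKrullDim_eq_bot_of_subsingleton

section CohomologicalDimension

variable {R : Type u} [CommRing R] {I J : Ideal R} {M : ModuleCat.{u} R} {c i n : ℕ}

lemma nontrivial_localCohomology_iff :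
    Nontrivial ((localCohomology I i).obj M) ↔ Nontrivial (extColimit I i M) :=
  (extColimitEquiv I i M).symm.toEquiv.nontrivial_congr

lemma le_cohomologicalDimension_of_nontrivial [Nontrivial (extColimit I i M)] :
    i ≤ cohomologicalDimension I M :=
  le_sSup ⟨i, rfl, nontrivial_localCohomology_iff.2 ‹_›⟩

variable [IsNoetherianRing R]

lemma cohomologicalDimension_le_of_supportDim_le (h : Module.supportDim R M ≤ n) :
    cohomologicalDimension I M ≤ n := by
  refine sSup_le ?_
  rintro _ ⟨i, rfl, hi⟩
  by_contra! hni
  refine not_subsingleton_iff_nontrivial.2 (nontrivial_localCohomology_iff.1 hi) ?_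
  exact subsingleton_extColimit_of_supportDim_lt I le_rfl M
    (h.trans_lt (by exact_mod_cast hni))

lemma exists_nontrivial_extColimit_extColimit (hIJ : I ≤ J) [Nontrivial (extColimit J n M)]
    (hc : cohomologicalDimension I M = c) (hcn : c ≠ n)
    (hprim : J.primaryComponent (extColimit I c M) = ⊤) :
    ∃ p q, p + q = n ∧ q < c ∧ p ≤ ringKrullDim (R ⧸ (I + Module.annihilator R M)) ∧
      Nontrivial (extColimit J p (extColimit I q M)) := by
  by_contra! h
  refine not_subsingleton (extColimit J n M) <|
    subsingleton_extColimit_of_extColimit_extColimit M hIJ fun p q hpq => ?_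
  obtain hq | rfl | hq := lt_trichotomy q c
  · refine (le_or_gt (p : WithBot ℕ∞) _).elim (h p q hpq hq) fun hp => ?_
    refine subsingleton_extColimit_of_supportDim_lt J le_rfl _ (lt_of_le_of_lt ?_ hp)
    exact supportDim_le_of_primaryComponent_eq_top (primaryComponent_extColimit I q M)
      annihilator_le_annihilator_extColimit
  · obtain ⟨p, rfl⟩ := Nat.exists_eq_succ_of_ne_zero (by lia : p ≠ 0)
    exact subsingleton_extColimit_succ_of_primaryComponent_eq_top p _ hprim
  · have : Subsingleton (extColimit I q M) := by
      rw [← not_nontrivial_iff_subsingleton]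
      intro hne
      have hqc := le_cohomologicalDimension_of_nontrivial (I := I) (i := q) (M := M)
      rw [hc, Nat.cast_le] at hqc
      exact hqc.not_gt hq
    exact subsingleton_extColimit_of_subsingleton J p _

theorem cd_eq_dim_or_cd_eq_dim_sub_one_of_isArtinian_top_localCohomology_general (hIJ : I ≤ J)
    (hn : Module.supportDim R M ≤ n) (hne : Nontrivial ((localCohomology J n).obj M))
    (hd : ringKrullDim (R ⧸ (I + Module.annihilator R M)) ≤ 2)
    (hc : cohomologicalDimension I M = c)
    (hprim : J.primaryComponent ((localCohomology I c).obj M) = ⊤) :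
    c = n ∨ (c = n - 1 ∧
      Nontrivial ((localCohomology J 2).obj ((localCohomology I (n - 2)).obj M))) := by
  have hcn : c ≤ n := Nat.cast_le.1 (hc.ge.trans (cohomologicalDimension_le_of_supportDim_le hn))
  refine or_iff_not_imp_left.2 fun hcn' => ?_
  have := nontrivial_localCohomology_iff.1 hne
  obtain ⟨p, q, rfl, hqc, hp, hpq⟩ := exists_nontrivial_extColimit_extColimit hIJ hc hcn'
    (primaryComponent_eq_top_of_injective (extColimitEquiv I c M).injective hprim)
  have hp2 : p ≤ 2 := by exact_mod_cast hp.trans hd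
  obtain rfl : p = 2 := by lia
  refine ⟨by lia, nontrivial_localCohomology_iff.2 ?_⟩
  rw [Nat.add_sub_cancel_left]
  contrapose! hpq
  exact subsingleton_extColimit_of_iso (extColimitEquiv I q M).symm.toModuleIso

end CohomologicalDimension

/-- over a Noetherian local ring, if `M` has Krull dimension `n` with
`H^n_m(M)` nonzero and Artinian, `dim (R/(I + Ann M)) = 2`, and `H^{cd(I,M)}_I(M)` is
Artinian, then either `cd(I,M) = n`, or `cd(I,M) = n - 1` and `H^2_m(H^{n-2}_I(M)) ≠ 0`. -/
theorem cd_eq_dim_or_cd_eq_dim_sub_one_of_isArtinian_top_localCohomology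
    (R : Type u) [CommRing R] [IsNoetherianRing R] [IsLocalRing R]
    (M : ModuleCat.{u} R) (n : ℕ)
    (hn : Order.krullDim (Module.support R M) = (n : WithBot ℕ∞))
    (hne : Nontrivial ((localCohomology (IsLocalRing.maximalIdeal R) n).obj M))
    (hart : IsArtinian R ((localCohomology (IsLocalRing.maximalIdeal R) n).obj M))
    (I : Ideal R)
    (hd : ringKrullDim (R ⧸ (I + Module.annihilator R M)) = (2 : WithBot ℕ∞))
    (c : ℕ) (hc : cohomologicalDimension I M = (c : ℕ∞))
    (hartc : IsArtinian R ((localCohomology I c).obj M)) :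
    c = n ∨ (c = n - 1 ∧
      Nontrivial ((localCohomology (IsLocalRing.maximalIdeal R) 2).obj
        ((localCohomology I (n - 2)).obj M))) := by
  have hI := IsLocalRing.le_maximalIdeal <|
    ne_top_of_ringKrullDim_quotient_ne_bot (hd.trans_ne WithBot.coe_ne_bot)
  exact cd_eq_dim_or_cd_eq_dim_sub_one_of_isArtinian_top_localCohomology_general
    (le_sup_left.trans hI) hn.le hne hd.le hc
    (primaryComponent_eq_top_of_isArtinian (IsLocalRing.maximalIdeal_le_jacobson _))
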